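/- Suppose X is c-quasiconvex, Y is c′-quasiconvex, G ⊊ X and G′ ⊊ Y are domains, and f : G → G′ is an M-quasihyperbolic homeomorphism. Then f is fully M′-quasihyperbolic with M′ = 216(cc′M)²; that is, for every subdomain D of G and all x, y ∈ D, (1/M′)·k_D(x,y) ≤ k_{f(D)}(f(x),f(y)) ≤ M′·k_D(x,y). In particular f is φ-FQC with φ(t) = M′t. -/

import Mathlib

open Metric Set Filter

section QHDefs

variable {X : Type*} [MetricSpace X] {Y : Type*} [MetricSpace Y]

/-- Distance to the boundary of `G`. -/
noncomputable def bdist (G : Set X) (z : X) : ℝ := Metric.infDist z (frontier G)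

/-- A unit-speed (1-Lipschitz, arclength-parametrized) rectifiable curve in `G`
from `x` to `y`, parametrized on `[0, L]`, where `L` is its length. -/
structure CurveIn (G : Set X) (γ : ℝ → X) (L : ℝ) (x y : X) : Prop where
  nonneg : 0 ≤ L
  lip : LipschitzOnWith 1 γ (Set.Icc 0 L)
  source : γ 0 = x
  target : γ L = y
  mem : ∀ t ∈ Set.Icc 0 L, γ t ∈ G

/-- Quasihyperbolic length of the subcurve `γ|[s,t]` in `G`: `∫_γ |dz|/δ_G(z)`. -/
noncomputable def qhLengthOn (G : Set X) (γ : ℝ → X) (s t : ℝ) : ℝ :=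
  ∫ u in s..t, 1 / bdist G (γ u)

/-- Quasihyperbolic length of a curve parametrized on `[0,L]`. -/
noncomputable def qhLength (G : Set X) (γ : ℝ → X) (L : ℝ) : ℝ := qhLengthOn G γ 0 L

/-- Quasihyperbolic distance in `G`. -/
noncomputable def qhDist (G : Set X) (x y : X) : ℝ :=
  sInf {l | ∃ γ L, CurveIn G γ L x y ∧ qhLength G γ L = l}

/-- `X` is a `c`-quasiconvex metric space. -/
def QCSpace (c : ℝ) (X : Type*) [MetricSpace X] : Prop :=
  ∀ x y : X, ∃ γ L, CurveIn (Set.univ : Set X) γ L x y ∧ L ≤ c * dist x y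

/-- A set `G` is `c`-quasiconvex. -/
def QCSet (c : ℝ) (G : Set X) : Prop :=
  ∀ x ∈ G, ∀ y ∈ G, ∃ γ L, CurveIn G γ L x y ∧ L ≤ c * dist x y

/-- A domain: a nonempty connected open set. -/
def IsDomainSet (G : Set X) : Prop := IsOpen G ∧ IsConnected G

/-- A proper domain: a nonempty connected open set, different from the whole space. -/
def IsProperDomain (G : Set X) : Prop := IsOpen G ∧ IsConnected G ∧ G ≠ Set.univ

/-- `G` is an `a`-John domain: each pair of points is joined by a rectifiable arc
satisfying the cone condition. -/
def IsJohn (a : ℝ) (G : Set X) : Prop :=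
  ∀ x ∈ G, ∀ y ∈ G, ∃ γ L, CurveIn G γ L x y ∧
    ∀ t ∈ Set.Icc 0 L, min t (L - t) ≤ a * bdist G (γ t)

/-- `G` is a `b`-uniform domain: each pair of points is joined by a double `b`-cone arc. -/
def IsUniform (b : ℝ) (G : Set X) : Prop :=
  ∀ x ∈ G, ∀ y ∈ G, ∃ γ L, CurveIn G γ L x y ∧ L ≤ b * dist x y ∧
    ∀ t ∈ Set.Icc 0 L, min t (L - t) ≤ b * bdist G (γ t)

/-- `G` is a locally `a`-John domain. -/
def LocallyJohn (a : ℝ) (G : Set X) : Prop :=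
  ∀ x ∈ G, ∀ r : ℝ, 0 < r → r ≤ bdist G x → IsJohn a (Metric.ball x r)

/-- The `h`-coarse quasihyperbolic length of the subcurve `γ|[s,t]` in `G`:
the supremum of sums `Σ k_G(x_{j-1},x_j)` over `h`-coarse sequences of successive
points of the arc (with the convention that it is `0` if there are none). -/
noncomputable def coarseQHLength (G : Set X) (γ : ℝ → X) (s t h : ℝ) : ℝ :=
  sSup {S | ∃ n : ℕ, 0 < n ∧ ∃ u : ℕ → ℝ,
    (∀ i < n, u i ≤ u (i + 1)) ∧ (∀ i ≤ n, u i ∈ Set.Icc s t) ∧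
    (∀ i < n, h ≤ qhDist G (γ (u i)) (γ (u (i + 1)))) ∧
    S = ∑ i ∈ Finset.range n, qhDist G (γ (u i)) (γ (u (i + 1)))}

/-- `γ` (parametrized on `[0,L]`) is a `(ν,h)`-solid arc in `G`. -/
def SolidArc (G : Set X) (γ : ℝ → X) (L ν h : ℝ) : Prop :=
  ∀ s t : ℝ, 0 ≤ s → s ≤ t → t ≤ L →
    coarseQHLength G γ s t h ≤ ν * qhDist G (γ s) (γ t)

/-- `γ` (parametrized on `[0,L]`) is an `ε`-short arc in `G`. -/
def ShortArc (G : Set X) (γ : ℝ → X) (L ε : ℝ) : Prop :=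
  qhLength G γ L ≤ qhDist G (γ 0) (γ L) + ε

/-- A map is weakly `H`-quasisymmetric. -/
def WeakQS (H : ℝ) (f : X → Y) : Prop :=
  ∀ x a b : X, dist x a ≤ dist x b → dist (f x) (f a) ≤ H * dist (f x) (f b)

/-- Image of a subset `D ⊆ G` under a homeomorphism `f : G ≃ₜ G'`, as a subset of `Y`. -/
def imSet {G : Set X} {G' : Set Y} (f : ↥G ≃ₜ ↥G') (D : Set X) : Set Y :=
  Subtype.val '' (f '' (Subtype.val ⁻¹' D))

/-- `f : G ≃ₜ G'` is `M`-quasihyperbolic. -/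
def MQH (M : ℝ) {G : Set X} {G' : Set Y} (f : ↥G ≃ₜ ↥G') : Prop :=
  ∀ x y : ↥G, (1 / M) * qhDist G ↑x ↑y ≤ qhDist G' ↑(f x) ↑(f y) ∧
    qhDist G' ↑(f x) ↑(f y) ≤ M * qhDist G ↑x ↑y

/-- `f : G ≃ₜ G'` is `C`-coarsely `M`-quasihyperbolic. -/
def CQH (M C : ℝ) {G : Set X} {G' : Set Y} (f : ↥G ≃ₜ ↥G') : Prop :=
  ∀ x y : ↥G, (qhDist G ↑x ↑y - C) / M ≤ qhDist G' ↑(f x) ↑(f y) ∧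
    qhDist G' ↑(f x) ↑(f y) ≤ M * qhDist G ↑x ↑y + C

/-- `f : G ≃ₜ G'` is freely `φ`-quasiconformal: in every subdomain, the
quasihyperbolic distances of `f` and `f⁻¹` are controlled by `φ`. -/
def FQC (φ : ℝ → ℝ) {G : Set X} {G' : Set Y} (f : ↥G ≃ₜ ↥G') : Prop :=
  ∀ D : Set X, ∀ hD : D ⊆ G, IsDomainSet D →
    ∀ x : X, ∀ hx : x ∈ D, ∀ y : X, ∀ hy : y ∈ D,
      qhDist (imSet f D) ↑(f ⟨x, hD hx⟩) ↑(f ⟨y, hD hy⟩) ≤ φ (qhDist D x y) ∧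
      qhDist D x y ≤ φ (qhDist (imSet f D) ↑(f ⟨x, hD hx⟩) ↑(f ⟨y, hD hy⟩))

end QHDefs

/-!
Since `k_D` is a length metric, it suffices to show that `f` is locally `64(cc'M)²`-Lipschitz from
`(D, k_D)` to `(f(D), k_{f(D)})`; the other inequality is the same one for `f⁻¹`.

Near a point `x`, quasihyperbolic distances are comparable to `|x - y| / δ(x)`: passing from `k_D`
to `k_G`, through the hypothesis on `f` to `k_{G'}`, and on to `k_{f(D)}` costs `16cc'M` times the
ratio of `δ_D(x) / δ_G(x)` to `δ_{f(D)}(f(x)) / δ_{G'}(f(x))`. This ratio is at most `4cc'M`: if a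
point `p` outside `f(D)` is close to `f(x)`, its preimage lies outside `D`, hence at
`k_G`-distance at least `δ_D(x) / (2cδ_G(x))` from `x`, while the `k_{G'}`-distance from `f(x)` to
`p` is at most `2c'|f(x) - p| / δ_{G'}(f(x))`.
-/

open Topology

section Gluing

theorem lipschitzOnWith_Icc_of_Icc_of_Icc {X : Type*} [PseudoMetricSpace X] {K : NNReal}
    {f : ℝ → X} {a b c : ℝ} (hab : LipschitzOnWith K f (Icc a b))
    (hbc : LipschitzOnWith K f (Icc b c)) : LipschitzOnWith K f (Icc a c) := by
  refine LipschitzOnWith.of_dist_le_mul fun s hs t ht => ?_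
  wlog hst : s ≤ t generalizing s t
  · rw [dist_comm, dist_comm s]
    exact this t ht s hs (le_of_not_ge hst)
  rcases le_total t b with htb | hbt
  · exact hab.dist_le_mul s ⟨hs.1, hst.trans htb⟩ t ⟨ht.1, htb⟩
  rcases le_total b s with hbs | hsb
  · exact hbc.dist_le_mul s ⟨hbs, hs.2⟩ t ⟨hbt, ht.2⟩
  calc dist (f s) (f t) ≤ dist (f s) (f b) + dist (f b) (f t) := dist_triangle _ _ _
    _ ≤ K * dist s b + K * dist b t :=
      add_le_add (hab.dist_le_mul s ⟨hs.1, hsb⟩ b ⟨hs.1.trans hsb, le_rfl⟩)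
        (hbc.dist_le_mul b ⟨le_rfl, hbt.trans ht.2⟩ t ⟨hbt, ht.2⟩)
    _ = K * dist s t := by
      rw [Real.dist_eq, Real.dist_eq, Real.dist_eq, abs_of_nonpos (sub_nonpos.2 hsb),
        abs_of_nonpos (sub_nonpos.2 hbt), abs_of_nonpos (sub_nonpos.2 hst)]
      ring

/-- The concatenation of `γ` on `[0, L]` with `γ'`, whose parameter is shifted to start at `L`;
it gives the triangle inequality for `qhDist`. -/
noncomputable def curveConcat {X : Type*} (γ γ' : ℝ → X) (L u : ℝ) : X :=
  if u ≤ L then γ u else γ' (u - L)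

theorem curveConcat_of_le {X : Type*} {γ γ' : ℝ → X} {L u : ℝ} (hu : u ≤ L) :
    curveConcat γ γ' L u = γ u :=
  if_pos hu

theorem curveConcat_of_ge {X : Type*} {γ γ' : ℝ → X} {L u : ℝ} (hL : γ L = γ' 0)
    (hu : L ≤ u) : curveConcat γ γ' L u = γ' (u - L) := by
  rcases hu.eq_or_lt with rfl | hu
  · rw [curveConcat_of_le le_rfl, sub_self, hL]
  · exact if_neg hu.not_ge

theorem le_sub_of_eventually_le_sub {a b : ℝ} (hab : a ≤ b) {K : Icc a b → Icc a b → ℝ}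
    {φ : Icc a b → ℝ} (hrefl : ∀ s, K s s ≤ 0) (htri : ∀ s t u, K s u ≤ K s t + K t u)
    (hloc : ∀ u, ∀ᶠ z : Icc a b × Icc a b in 𝓝 (u, u),
      z.1 ≤ z.2 → K z.1 z.2 ≤ φ z.2 - φ z.1) :
    K ⟨a, left_mem_Icc.2 hab⟩ ⟨b, right_mem_Icc.2 hab⟩ ≤
      φ ⟨b, right_mem_Icc.2 hab⟩ - φ ⟨a, left_mem_Icc.2 hab⟩ := by
  choose U hUopen hU hUK using fun u => exists_nhds_square (hloc u)
  obtain ⟨t, ht₀, htmono, ⟨n, hn⟩, htU⟩ := exists_monotone_Icc_subset_open_cover_Icc hab hUopen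
    fun u _ => mem_iUnion.2 ⟨u, hU u⟩
  have hstep (k : ℕ) : K (t k) (t (k + 1)) ≤ φ (t (k + 1)) - φ (t k) := by
    obtain ⟨u, hu⟩ := htU k
    have hk := htmono k.le_succ
    exact hUK u (mk_mem_prod (hu (left_mem_Icc.2 hk)) (hu (right_mem_Icc.2 hk))) hk
  have hsum (k : ℕ) : K (t 0) (t k) ≤ φ (t k) - φ (t 0) := by
    induction k with
    | zero => simpa using hrefl (t 0)
    | succ k ih => linarith [htri (t 0) (t k) (t (k + 1)), hstep k]
  have hstart : t 0 = ⟨a, left_mem_Icc.2 hab⟩ := Subtype.ext ht₀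
  have hend : t n = ⟨b, right_mem_Icc.2 hab⟩ := Subtype.ext (hn n le_rfl)
  rw [← hstart, ← hend]
  exact hsum n

end Gluing

section BoundaryDistance

variable {X : Type*} [MetricSpace X] {G : Set X}

theorem bdist_nonneg (G : Set X) (x : X) : 0 ≤ bdist G x :=
  infDist_nonneg

theorem bdist_le_add_dist (G : Set X) (x y : X) : bdist G x ≤ bdist G y + dist x y :=
  infDist_le_infDist_add_dist

theorem continuous_bdist (G : Set X) : Continuous (bdist G) :=
  continuous_infDist_pt _

theorem bdist_pos (hG : IsOpen G) (hfr : (frontier G).Nonempty) {x : X} (hx : x ∈ G) :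
    0 < bdist G x :=
  (isClosed_frontier.notMem_iff_infDist_pos hfr).1
    fun h => (hG.frontier_eq ▸ h : x ∈ closure G \ G).2 hx

theorem eventually_mul_dist_le_bdist (hG : IsOpen G) (hfr : (frontier G).Nonempty) {p : X}
    (hp : p ∈ G) (a : ℝ) : ∀ᶠ z : X × X in 𝓝 (p, p), a * dist z.1 z.2 ≤ bdist G z.1 := by
  have hdist : Continuous fun z : X × X => a * dist z.1 z.2 := by fun_prop
  have hlt : a * dist p p < bdist G p := by simpa using bdist_pos hG hfr hp
  filter_upwards [hdist.continuousAt.eventually_lt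
    ((continuous_bdist G).comp continuous_fst).continuousAt hlt] with z hz using hz.le

end BoundaryDistance

section Curves

variable {X : Type*} [MetricSpace X] {G D : Set X} {γ γ' : ℝ → X} {L L' : ℝ} {x y z : X}

namespace CurveIn

theorem dist_source_le (h : CurveIn G γ L x y) {t : ℝ} (ht : t ∈ Icc 0 L) :
    dist x (γ t) ≤ t := by
  simpa [Real.dist_eq, h.source, abs_of_nonneg ht.1] using
    h.lip.dist_le_mul 0 (left_mem_Icc.2 h.nonneg) t ht

theorem dist_le (h : CurveIn G γ L x y) : dist x y ≤ L :=
  h.target ▸ h.dist_source_le (right_mem_Icc.2 h.nonneg)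

theorem source_mem (h : CurveIn G γ L x y) : x ∈ G :=
  h.source ▸ h.mem 0 (left_mem_Icc.2 h.nonneg)

theorem target_mem (h : CurveIn G γ L x y) : y ∈ G :=
  h.target ▸ h.mem L (right_mem_Icc.2 h.nonneg)

theorem mono (h : CurveIn D γ L x y) (hDG : D ⊆ G) : CurveIn G γ L x y :=
  { h with mem := fun t ht => hDG (h.mem t ht) }

theorem const (hx : x ∈ G) : CurveIn G (fun _ => x) 0 x x :=
  ⟨le_rfl, (LipschitzWith.const' x).lipschitzOnWith, rfl, rfl, fun _ _ => hx⟩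

theorem comp (h : CurveIn G γ L x y) {φ : ℝ → ℝ} (hφ : LipschitzWith 1 φ) (hL' : 0 ≤ L')
    (hmaps : MapsTo φ (Icc 0 L') (Icc 0 L)) :
    CurveIn G (γ ∘ φ) L' (γ (φ 0)) (γ (φ L')) where
  nonneg := hL'
  lip := by simpa only [one_mul] using h.lip.comp hφ.lipschitzOnWith hmaps
  source := rfl
  target := rfl
  mem t ht := h.mem _ (hmaps ht)

theorem restrict (h : CurveIn G γ L x y) {s t : ℝ} (hs : 0 ≤ s) (hst : s ≤ t) (ht : t ≤ L) :
    CurveIn G (γ ∘ (· + s)) (t - s) (γ s) (γ t) := by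
  simpa using h.comp (isometry_add_right s).lipschitz (sub_nonneg.2 hst)
    fun u hu => ⟨add_nonneg hu.1 hs, (le_sub_iff_add_le.1 hu.2).trans ht⟩

theorem reverse (h : CurveIn G γ L x y) : CurveIn G (γ ∘ (L - ·)) L y x := by
  have hφ : LipschitzWith 1 (L - ·) := (IsometryEquiv.subLeft L).isometry.lipschitz
  simpa [h.source, h.target] using h.comp hφ h.nonneg
    fun u hu => ⟨sub_nonneg.2 hu.2, sub_le_self L hu.1⟩

end CurveIn

theorem CurveIn.concat (h : CurveIn G γ L x y) (h' : CurveIn G γ' L' y z) :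
    CurveIn G (curveConcat γ γ' L) (L + L') x z where
  nonneg := add_nonneg h.nonneg h'.nonneg
  lip := by
    have hjoin : γ L = γ' 0 := h.target.trans h'.source.symm
    refine lipschitzOnWith_Icc_of_Icc_of_Icc (b := L) (fun u hu v hv => ?_)
      (LipschitzOnWith.of_dist_le_mul fun u hu v hv => ?_)
    · rw [curveConcat_of_le hu.2, curveConcat_of_le hv.2]
      exact h.lip hu hv
    · rw [curveConcat_of_ge hjoin hu.1, curveConcat_of_ge hjoin hv.1, ← dist_sub_right u v L]
      exact h'.lip.dist_le_mul _ ⟨sub_nonneg.2 hu.1, sub_le_iff_le_add'.2 hu.2⟩ _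
        ⟨sub_nonneg.2 hv.1, sub_le_iff_le_add'.2 hv.2⟩
  source := (curveConcat_of_le h.nonneg).trans h.source
  target := by
    rw [curveConcat_of_ge (h.target.trans h'.source.symm) (le_add_of_nonneg_right h'.nonneg),
      add_sub_cancel_left, h'.target]
  mem u hu := by
    rcases le_total u L with huL | hLu
    · exact curveConcat_of_le (γ := γ) huL ▸ h.mem u ⟨hu.1, huL⟩
    · exact curveConcat_of_ge (h.target.trans h'.source.symm) hLu ▸
        h'.mem _ ⟨sub_nonneg.2 hLu, sub_le_iff_le_add'.2 hu.2⟩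

namespace CurveIn

theorem exists_mem_frontier (h : CurveIn G γ L x y) (hD : IsOpen D) (hx : x ∈ D) (hy : y ∉ D) :
    ∃ t ∈ Icc 0 L, γ t ∈ frontier D := by
  have himage : IsPreconnected (γ '' Icc 0 L) := isPreconnected_Icc.image γ h.lip.continuousOn
  by_contra! hfr
  have hsub : γ '' Icc 0 L ⊆ D := by
    refine himage.subset_of_closure_inter_subset hD
      ⟨x, ⟨0, left_mem_Icc.2 h.nonneg, h.source⟩, hx⟩ ?_
    rintro _ ⟨hcl, t, ht, rfl⟩
    by_contra hn
    exact hfr t ht (hD.frontier_eq ▸ ⟨hcl, hn⟩)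
  exact hy (hsub ⟨L, right_mem_Icc.2 h.nonneg, h.target⟩)

theorem bdist_le_length (h : CurveIn G γ L x y) (hD : IsOpen D) (hx : x ∈ D) (hy : y ∉ D) :
    bdist D x ≤ L := by
  obtain ⟨t, ht, hfr⟩ := h.exists_mem_frontier hD hx hy
  exact (infDist_le_dist_of_mem hfr).trans ((h.dist_source_le ht).trans ht.2)

theorem of_length_lt_bdist (h : CurveIn G γ L x y) (hD : IsOpen D) (hx : x ∈ D)
    (hL : L < bdist D x) : CurveIn D γ L x y :=
  { h with
    mem := fun t ht => by
      by_contra hn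
      have hsub := h.restrict le_rfl ht.1 ht.2
      rw [h.source] at hsub
      linarith [hsub.bdist_le_length hD hx hn, ht.2] }

theorem of_ball_subset (h : CurveIn G γ L x y) {r : ℝ} (hL : L < r) (hball : ball x r ⊆ D) :
    CurveIn D γ L x y :=
  { h with
    mem := fun _ ht =>
      hball (mem_ball'.2 ((h.dist_source_le ht).trans_lt (ht.2.trans_lt hL))) }

end CurveIn

end Curves

section QuasihyperbolicLength

variable {X : Type*} [MetricSpace X] {G : Set X} {γ γ' : ℝ → X} {L L' : ℝ} {x y z : X}

theorem qhLength_nonneg (G : Set X) (γ : ℝ → X) (hL : 0 ≤ L) : 0 ≤ qhLength G γ L :=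
  intervalIntegral.integral_nonneg hL fun _ _ => one_div_nonneg.2 (bdist_nonneg G _)

namespace CurveIn

theorem intervalIntegrable (h : CurveIn G γ L x y) (hG : IsOpen G) {s t : ℝ}
    (hs : s ∈ Icc 0 L) (ht : t ∈ Icc 0 L) :
    IntervalIntegrable (fun u => 1 / bdist G (γ u)) MeasureTheory.volume s t := by
  rcases (frontier G).eq_empty_or_nonempty with hfr | hfr
  · simp [bdist, hfr]
  · have hcont : ContinuousOn (fun u => 1 / bdist G (γ u)) (Icc 0 L) :=
      continuousOn_const.div ((continuous_bdist G).comp_continuousOn h.lip.continuousOn)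
        fun u hu => (bdist_pos hG hfr (h.mem u hu)).ne'
    exact (hcont.mono (uIcc_subset_Icc hs ht)).intervalIntegrable

theorem qhLengthOn_add (h : CurveIn G γ L x y) (hG : IsOpen G) {s t u : ℝ}
    (hs : s ∈ Icc 0 L) (ht : t ∈ Icc 0 L) (hu : u ∈ Icc 0 L) :
    qhLengthOn G γ s t + qhLengthOn G γ t u = qhLengthOn G γ s u :=
  intervalIntegral.integral_add_adjacent_intervals (h.intervalIntegrable hG hs ht)
    (h.intervalIntegrable hG ht hu)

theorem qhLength_concat (h : CurveIn G γ L x y) (h' : CurveIn G γ' L' y z) (hG : IsOpen G) :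
    qhLength G (curveConcat γ γ' L) (L + L') = qhLength G γ L + qhLength G γ' L' := by
  have hLL' : L ≤ L + L' := le_add_of_nonneg_right h'.nonneg
  have hleft : qhLengthOn G (curveConcat γ γ' L) 0 L = qhLength G γ L :=
    intervalIntegral.integral_congr fun u hu => by
      rw [uIcc_of_le h.nonneg] at hu
      simp only [curveConcat_of_le hu.2]
  have hright : qhLengthOn G (curveConcat γ γ' L) L (L + L') = qhLength G γ' L' := by
    calc qhLengthOn G (curveConcat γ γ' L) L (L + L')
        = ∫ u in L..L + L', 1 / bdist G (γ' (u - L)) :=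
          intervalIntegral.integral_congr fun u hu => by
            rw [uIcc_of_le hLL'] at hu
            simp only [curveConcat_of_ge (h.target.trans h'.source.symm) hu.1]
      _ = qhLength G γ' L' := by
          rw [intervalIntegral.integral_comp_sub_right (fun u => 1 / bdist G (γ' u)), sub_self,
            add_sub_cancel_left]
          rfl
  have hadd := (h.concat h').qhLengthOn_add hG ⟨le_rfl, h.nonneg.trans hLL'⟩ ⟨h.nonneg, hLL'⟩
    ⟨h.nonneg.trans hLL', le_rfl⟩
  rw [← hleft, ← hright, hadd, qhLength]

theorem qhLength_le (h : CurveIn G γ L x y) (hG : IsOpen G) (hfr : (frontier G).Nonempty)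
    (hL : L ≤ bdist G x / 2) : qhLength G γ L ≤ 2 * L / bdist G x := by
  calc qhLength G γ L ≤ ∫ _ in (0 : ℝ)..L, 2 / bdist G x := by
        refine intervalIntegral.integral_mono_on h.nonneg
          (h.intervalIntegrable hG (left_mem_Icc.2 h.nonneg) (right_mem_Icc.2 h.nonneg))
          intervalIntegrable_const fun u hu => ?_
        rw [div_le_div_iff₀ (bdist_pos hG hfr (h.mem u hu)) (bdist_pos hG hfr h.source_mem)]
        linarith [bdist_le_add_dist G x (γ u), h.dist_source_le hu, hu.2]
    _ = 2 * L / bdist G x := by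
        rw [intervalIntegral.integral_const, smul_eq_mul]
        ring

theorem div_le_qhLength (h : CurveIn G γ L x y) (hG : IsOpen G) (hfr : (frontier G).Nonempty) :
    L / (bdist G x + L) ≤ qhLength G γ L := by
  calc L / (bdist G x + L) = ∫ _ in (0 : ℝ)..L, 1 / (bdist G x + L) := by
        rw [intervalIntegral.integral_const, smul_eq_mul]
        ring
    _ ≤ qhLength G γ L := by
        refine intervalIntegral.integral_mono_on h.nonneg intervalIntegrable_const
          (h.intervalIntegrable hG (left_mem_Icc.2 h.nonneg) (right_mem_Icc.2 h.nonneg))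
          fun u hu => one_div_le_one_div_of_le (bdist_pos hG hfr (h.mem u hu)) ?_
        linarith [bdist_le_add_dist G (γ u) x, dist_comm (γ u) x, h.dist_source_le hu, hu.2]

end CurveIn

end QuasihyperbolicLength

section QuasihyperbolicDistance

variable {X : Type*} [MetricSpace X] {G D : Set X} {γ : ℝ → X} {L : ℝ} {x y z : X}

/-- `x` and `y` are joined by a rectifiable curve in `G`, which makes `qhDist G x y` a genuine
infimum: otherwise it is the junk value `sInf ∅ = 0`. -/
def RectJoined (G : Set X) (x y : X) : Prop :=
  ∃ γ L, CurveIn G γ L x y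

theorem qhDist_nonneg (G : Set X) (x y : X) : 0 ≤ qhDist G x y := by
  refine Real.sInf_nonneg ?_
  rintro _ ⟨γ, L, h, rfl⟩
  exact qhLength_nonneg G γ h.nonneg

namespace CurveIn

theorem qhDist_le (h : CurveIn G γ L x y) : qhDist G x y ≤ qhLength G γ L := by
  refine csInf_le ⟨0, ?_⟩ ⟨γ, L, h, rfl⟩
  rintro _ ⟨γ', L', h', rfl⟩
  exact qhLength_nonneg G γ' h'.nonneg

theorem qhDist_le_qhLengthOn (h : CurveIn G γ L x y) {s t : ℝ} (hs : 0 ≤ s) (hst : s ≤ t)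
    (ht : t ≤ L) : qhDist G (γ s) (γ t) ≤ qhLengthOn G γ s t := by
  calc qhDist G (γ s) (γ t) ≤ ∫ u in (0 : ℝ)..t - s, 1 / bdist G (γ (u + s)) :=
        (h.restrict hs hst ht).qhDist_le
    _ = qhLengthOn G γ s t := by
        rw [intervalIntegral.integral_comp_add_right (fun u => 1 / bdist G (γ u)), zero_add,
          sub_add_cancel, qhLengthOn]

end CurveIn

theorem qhDist_self (hx : x ∈ G) : qhDist G x x = 0 :=
  le_antisymm ((CurveIn.const hx).qhDist_le.trans_eq intervalIntegral.integral_same)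
    (qhDist_nonneg G x x)

namespace RectJoined

theorem mono (h : RectJoined D x y) (hDG : D ⊆ G) : RectJoined G x y :=
  let ⟨γ, L, hγ⟩ := h
  ⟨γ, L, hγ.mono hDG⟩

theorem symm (h : RectJoined G x y) : RectJoined G y x :=
  let ⟨_, L, hγ⟩ := h
  ⟨_, L, hγ.reverse⟩

theorem trans (h : RectJoined G x y) (h' : RectJoined G y z) : RectJoined G x z :=
  let ⟨_, _, hγ⟩ := h
  let ⟨_, _, hγ'⟩ := h'
  ⟨_, _, hγ.concat hγ'⟩

theorem left_mem (h : RectJoined G x y) : x ∈ G :=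
  let ⟨_, _, hγ⟩ := h
  hγ.source_mem

theorem le_qhDist (h : RectJoined G x y) {b : ℝ}
    (hb : ∀ γ L, CurveIn G γ L x y → b ≤ qhLength G γ L) : b ≤ qhDist G x y := by
  obtain ⟨γ, L, hγ⟩ := h
  refine le_csInf ⟨_, γ, L, hγ, rfl⟩ ?_
  rintro _ ⟨γ', L', hγ', rfl⟩
  exact hb γ' L' hγ'

theorem qhDist_triangle (hxy : RectJoined G x y) (hyz : RectJoined G y z) (hG : IsOpen G) :
    qhDist G x z ≤ qhDist G x y + qhDist G y z := by
  rw [← sub_le_iff_le_add]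
  refine hxy.le_qhDist fun γ L h => ?_
  rw [sub_le_comm]
  refine hyz.le_qhDist fun γ' L' h' => ?_
  rw [sub_le_iff_le_add', ← h.qhLength_concat h' hG]
  exact (h.concat h').qhDist_le

theorem dist_div_le_qhDist (h : RectJoined G x y) (hG : IsOpen G)
    (hfr : (frontier G).Nonempty) : dist x y / (bdist G x + dist x y) ≤ qhDist G x y := by
  refine h.le_qhDist fun γ L hγ => le_trans ?_ (hγ.div_le_qhLength hG hfr)
  have hpos := bdist_pos hG hfr h.left_mem
  rw [div_le_div_iff₀ (add_pos_of_pos_of_nonneg hpos dist_nonneg)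
    (add_pos_of_pos_of_nonneg hpos hγ.nonneg)]
  nlinarith [hγ.dist_le]

theorem dist_le_mul_qhDist (h : RectJoined G x y) (hG : IsOpen G) (hfr : (frontier G).Nonempty)
    (hxy : dist x y ≤ bdist G x) : dist x y ≤ 2 * bdist G x * qhDist G x y := by
  have hpos : 0 < bdist G x + dist x y :=
    add_pos_of_pos_of_nonneg (bdist_pos hG hfr h.left_mem) dist_nonneg
  calc dist x y ≤ qhDist G x y * (bdist G x + dist x y) :=
        (div_le_iff₀ hpos).1 (h.dist_div_le_qhDist hG hfr)
    _ ≤ qhDist G x y * (bdist G x + bdist G x) := by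
        gcongr
        exact qhDist_nonneg G x y
    _ = 2 * bdist G x * qhDist G x y := by ring

theorem le_mul_qhDist_of_eventually {ρ : G → G → ℝ} {C : ℝ} {x y : G} (h : RectJoined G x y)
    (hG : IsOpen G) (hC : 0 < C) (hrefl : ∀ p, ρ p p ≤ 0)
    (htri : ∀ p q r, ρ p r ≤ ρ p q + ρ q r)
    (hloc : ∀ p, ∀ᶠ z : G × G in 𝓝 (p, p), ρ z.1 z.2 ≤ C * qhDist G z.1 z.2) :
    ρ x y ≤ C * qhDist G x y := by
  rw [← div_le_iff₀' hC]
  refine h.le_qhDist fun γ L hγ => ?_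
  rw [div_le_iff₀' hC]
  let σ (t : Icc 0 L) : G := ⟨γ t, hγ.mem t t.2⟩
  have hσ : Continuous σ := hγ.lip.continuousOn.domRestrict.subtype_mk _
  have h0 : (0 : ℝ) ∈ Icc 0 L := left_mem_Icc.2 hγ.nonneg
  have key := le_sub_of_eventually_le_sub hγ.nonneg (K := fun s t => ρ (σ s) (σ t))
    (φ := fun t => C * qhLengthOn G γ 0 t) (fun s => hrefl (σ s)) (fun s t u => htri _ _ _)
    fun u => by
      filter_upwards [((hσ.prodMap hσ).tendsto (u, u)).eventually (hloc (σ u))] with ⟨s, t⟩ hst hle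
      calc ρ (σ s) (σ t) ≤ C * qhDist G (γ s) (γ t) := hst
        _ ≤ C * qhLengthOn G γ s t := by
            gcongr
            exact hγ.qhDist_le_qhLengthOn s.2.1 hle t.2.2
        _ = C * qhLengthOn G γ 0 t - C * qhLengthOn G γ 0 s := by
            rw [← hγ.qhLengthOn_add hG h0 s.2 t.2]
            ring
  have hx : σ ⟨0, h0⟩ = x := Subtype.ext hγ.source
  have hy : σ ⟨L, right_mem_Icc.2 hγ.nonneg⟩ = y := Subtype.ext hγ.target
  simpa [hx, hy, qhLength, qhLengthOn] using key

end RectJoined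

end QuasihyperbolicDistance

section QuasiconvexSpaces

variable {X : Type*} [MetricSpace X] {c : ℝ} {G D : Set X} {x y : X}

namespace QCSpace

theorem frontier_nonempty (hX : QCSpace c X) (hD : IsOpen D) (hx : x ∈ D) (huniv : D ≠ univ) :
    (frontier D).Nonempty := by
  obtain ⟨y, hy⟩ := (ne_univ_iff_exists_notMem D).1 huniv
  obtain ⟨γ, L, hγ, -⟩ := hX x y
  obtain ⟨t, -, ht⟩ := hγ.exists_mem_frontier hD hx hy
  exact ⟨_, ht⟩

theorem bdist_le_mul_dist (hX : QCSpace c X) (hD : IsOpen D) (hx : x ∈ D) (hy : y ∉ D) :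
    bdist D x ≤ c * dist x y := by
  obtain ⟨γ, L, hγ, hL⟩ := hX x y
  exact (hγ.bdist_le_length hD hx hy).trans hL

theorem bdist_le_mul_bdist (hX : QCSpace c X) (hc : 0 < c) (hD : IsOpen D) (hG : IsOpen G)
    (hDG : D ⊆ G) (hfr : (frontier G).Nonempty) (hx : x ∈ D) :
    bdist D x ≤ c * bdist G x := by
  rw [← div_le_iff₀' hc]
  refine (le_infDist hfr).2 fun p hp => ?_
  rw [div_le_iff₀' hc]
  exact hX.bdist_le_mul_dist hD hx fun h => (hG.frontier_eq ▸ hp : p ∈ closure G \ G).2 (hDG h)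

theorem exists_curveIn (hX : QCSpace c X) (hG : IsOpen G) (hx : x ∈ G)
    (hxy : c * dist x y < bdist G x) : ∃ γ L, CurveIn G γ L x y ∧ L ≤ c * dist x y := by
  obtain ⟨γ, L, hγ, hL⟩ := hX x y
  exact ⟨γ, L, hγ.of_length_lt_bdist hG hx (hL.trans_lt hxy), hL⟩

theorem qhDist_le (hX : QCSpace c X) (hG : IsOpen G) (hfr : (frontier G).Nonempty) (hx : x ∈ G)
    (hxy : c * dist x y ≤ bdist G x / 2) : qhDist G x y ≤ 2 * c * dist x y / bdist G x := by
  have hpos := bdist_pos hG hfr hx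
  obtain ⟨γ, L, hγ, hL⟩ := hX.exists_curveIn hG hx (by linarith)
  calc qhDist G x y ≤ qhLength G γ L := hγ.qhDist_le
    _ ≤ 2 * L / bdist G x := hγ.qhLength_le hG hfr (hL.trans hxy)
    _ ≤ 2 * c * dist x y / bdist G x := by
        rw [mul_assoc]
        gcongr

theorem eventually_rectJoined (hX : QCSpace c X) (hG : IsOpen G) (hx : x ∈ G) :
    ∀ᶠ y in 𝓝 x, RectJoined G x y := by
  obtain ⟨r, hr, hball⟩ := Metric.isOpen_iff.1 hG x hx
  have hcont : ContinuousAt (fun y => c * dist x y) x := by fun_prop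
  filter_upwards [hcont.eventually_lt continuousAt_const (by simpa using hr)] with y hy
  obtain ⟨γ, L, hγ, hL⟩ := hX x y
  exact ⟨γ, L, hγ.of_ball_subset (hL.trans_lt hy) hball⟩

theorem rectJoined_of_isPreconnected (hX : QCSpace c X) (hG : IsOpen G)
    (hD : IsPreconnected D) (hDG : D ⊆ G) (hx : x ∈ D) (hy : y ∈ D) : RectJoined G x y :=
  hD.induction₂ (RectJoined G)
    (fun _ hz => mem_nhdsWithin_of_mem_nhds (hX.eventually_rectJoined hG (hDG hz)))
    (fun _ _ _ _ _ _ h h' => h.trans h') (fun _ _ _ _ h => h.symm) hx hy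

theorem bdist_le_mul_qhDist (hX : QCSpace c X) (hc : 0 < c) (hD : IsOpen D) (hG : IsOpen G)
    (hDG : D ⊆ G) (hfr : (frontier G).Nonempty) (hx : x ∈ D) (hy : y ∉ D)
    (hxy : RectJoined G x y) : bdist D x ≤ 2 * c * bdist G x * qhDist G x y := by
  have hpos := bdist_pos hG hfr (hDG hx)
  have hden : 0 < bdist G x + dist x y := add_pos_of_pos_of_nonneg hpos dist_nonneg
  have hfar : bdist D x * bdist G x ≤ c * dist x y * bdist G x := by
    gcongr
    exact hX.bdist_le_mul_dist hD hx hy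
  have hnear : bdist D x * dist x y ≤ c * bdist G x * dist x y := by
    gcongr
    exact hX.bdist_le_mul_bdist hc hD hG hDG hfr hx
  calc bdist D x ≤ 2 * c * bdist G x * (dist x y / (bdist G x + dist x y)) := by
        rw [← mul_div_assoc, le_div_iff₀ hden]
        linarith
    _ ≤ 2 * c * bdist G x * qhDist G x y := by
        gcongr
        exact hxy.dist_div_le_qhDist hG hfr

end QCSpace

end QuasiconvexSpaces

section Homeomorphisms

variable {X : Type*} [MetricSpace X] {Y : Type*} [MetricSpace Y] {c c' M : ℝ}
  {G D : Set X} {G' : Set Y}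

theorem RectJoined.image (hY : QCSpace c' Y) (hG' : IsOpen G') {g : G → G'} (hg : Continuous g)
    {x y : G} (h : RectJoined G x y) : RectJoined G' (g x) (g y) := by
  obtain ⟨γ, L, hγ⟩ := h
  have : PreconnectedSpace (Icc 0 L) := Subtype.preconnectedSpace isPreconnected_Icc
  let σ (t : Icc 0 L) : Y := g ⟨γ t, hγ.mem t t.2⟩
  have hσ : Continuous σ :=
    continuous_subtype_val.comp (hg.comp (hγ.lip.continuousOn.domRestrict.subtype_mk _))
  refine hY.rectJoined_of_isPreconnected hG' (isPreconnected_range hσ)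
    (range_subset_iff.2 fun t => (g _).2) ⟨⟨0, left_mem_Icc.2 hγ.nonneg⟩, ?_⟩
    ⟨⟨L, right_mem_Icc.2 hγ.nonneg⟩, ?_⟩
  · exact congrArg (fun z => (g z : Y)) (Subtype.ext hγ.source)
  · exact congrArg (fun z => (g z : Y)) (Subtype.ext hγ.target)

section Image

variable (f : G ≃ₜ G')

theorem mem_imSet {x : G} : (f x : Y) ∈ imSet f D ↔ (x : X) ∈ D := by
  simp [imSet]

theorem imSet_subset : imSet f D ⊆ G' :=
  Subtype.coe_image_subset _ _

theorem isOpen_imSet (hG' : IsOpen G') (hD : IsOpen D) : IsOpen (imSet f D) :=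
  hG'.isOpenMap_subtype_val _ (f.isOpenMap _ (hD.preimage continuous_subtype_val))

theorem isPreconnected_imSet (hDG : D ⊆ G) (hD : IsPreconnected D) :
    IsPreconnected (imSet f D) := by
  refine IsPreconnected.image ?_ _ continuous_subtype_val.continuousOn
  rwa [f.isPreconnected_image, ← Topology.IsInducing.subtypeVal.isPreconnected_image,
    Subtype.image_preimage_coe, inter_eq_right.2 hDG]

theorem imSet_symm_imSet (hDG : D ⊆ G) : imSet f.symm (imSet f D) = D := by
  have hinv (S : Set G) : f.symm '' (f '' S) = S := f.toEquiv.symm_image_image S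
  rw [imSet, imSet, preimage_image_eq _ Subtype.val_injective, hinv,
    Subtype.image_preimage_coe, inter_eq_right.2 hDG]

end Image

variable {f : G ≃ₜ G'}

theorem MQH.qhDist_le (hf : MQH M f) (hM : 0 < M) (x y : G) :
    qhDist G x y ≤ M * qhDist G' (f x) (f y) := by
  simpa only [one_div_mul_eq_div, div_le_iff₀' hM] using (hf x y).1

theorem MQH.symm (hf : MQH M f) (hM : 0 < M) : MQH M f.symm := fun p q => by
  have hle := hf.qhDist_le hM (f.symm p) (f.symm q)
  have hge := (hf (f.symm p) (f.symm q)).2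
  rw [f.apply_symm_apply, f.apply_symm_apply] at hle hge
  exact ⟨by rwa [one_div_mul_eq_div, div_le_iff₀' hM], hle⟩

theorem MQH.bdist_mul_bdist_le_dist (hf : MQH M f) (hc : 0 < c) (hc' : 0 < c') (hM : 1 ≤ M)
    (hX : QCSpace c X) (hY : QCSpace c' Y) (hG : IsOpen G) (hG' : IsOpen G')
    (hfr : (frontier G).Nonempty) (hfr' : (frontier G').Nonempty) (hDG : D ⊆ G) (hD : IsOpen D)
    {x : G} (hx : (x : X) ∈ D) {p : Y} (hp : p ∉ imSet f D) :
    bdist D x * bdist G' (f x) ≤ 4 * (c * c' * M) * (dist (f x : Y) p * bdist G x) := by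
  have hδ : 0 < bdist G x := bdist_pos hG hfr x.2
  have hδ' : 0 < bdist G' (f x) := bdist_pos hG' hfr' (f x).2
  rcases le_or_gt (c' * dist (f x : Y) p) (bdist G' (f x) / 2) with hnear | hfar
  · obtain ⟨γ, L, hγ, -⟩ := hY.exists_curveIn hG' (f x).2 (by linarith)
    obtain ⟨q, rfl⟩ : ∃ q, (f q : Y) = p :=
      ⟨f.symm ⟨p, hγ.target_mem⟩, by rw [f.apply_symm_apply]⟩
    have hxq : RectJoined G x q := by
      simpa using RectJoined.image hX hG f.symm.continuous ⟨γ, L, hγ⟩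
    have hqD : (q : X) ∉ D := fun h => hp ((mem_imSet f).2 h)
    rw [← le_div_iff₀ hδ']
    calc bdist D x ≤ 2 * c * bdist G x * qhDist G x q :=
          hX.bdist_le_mul_qhDist hc hD hG hDG hfr hx hqD hxq
      _ ≤ 2 * c * bdist G x *
            (M * (2 * c' * dist (f x : Y) (f q) / bdist G' (f x))) := by
          gcongr
          refine (hf.qhDist_le (by linarith) x q).trans ?_
          gcongr
          exact hY.qhDist_le hG' hfr' (f x).2 hnear
      _ = 4 * (c * c' * M) * (dist (f x : Y) (f q) * bdist G x) / bdist G' (f x) := by ring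
  · calc bdist D x * bdist G' (f x) ≤ c * bdist G x * (4 * (c' * dist (f x : Y) p)) := by
          gcongr
          · exact hX.bdist_le_mul_bdist hc hD hG hDG hfr hx
          · linarith
      _ ≤ c * bdist G x * (4 * (c' * dist (f x : Y) p)) * M :=
          le_mul_of_one_le_right (by positivity) hM
      _ = 4 * (c * c' * M) * (dist (f x : Y) p * bdist G x) := by ring

theorem MQH.bdist_mul_bdist_le (hf : MQH M f) (hc : 0 < c) (hc' : 0 < c') (hM : 1 ≤ M)
    (hX : QCSpace c X) (hY : QCSpace c' Y) (hG : IsOpen G) (hG' : IsOpen G')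
    (hfr : (frontier G).Nonempty) (hfr' : (frontier G').Nonempty) (hDG : D ⊆ G) (hD : IsOpen D)
    (hDfr' : (frontier (imSet f D)).Nonempty) {x : G} (hx : (x : X) ∈ D) :
    bdist D x * bdist G' (f x) ≤
      4 * (c * c' * M) * (bdist (imSet f D) (f x) * bdist G x) := by
  have hpos : 0 < 4 * (c * c' * M) * bdist G x := by
    have := bdist_pos hG hfr x.2
    positivity
  have hle : bdist D x * bdist G' (f x) / (4 * (c * c' * M) * bdist G x) ≤
      bdist (imSet f D) (f x) := by
    refine (le_infDist hDfr').2 fun p hp => ?_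
    have hpD : p ∉ imSet f D :=
      ((isOpen_imSet f hG' hD).frontier_eq ▸ hp : p ∈ closure (imSet f D) \ imSet f D).2
    rw [div_le_iff₀' hpos]
    linarith [hf.bdist_mul_bdist_le_dist hc hc' hM hX hY hG hG' hfr hfr' hDG hD hx hpD]
  rw [div_le_iff₀' hpos] at hle
  linarith

theorem MQH.qhDist_imSet_le_of_dist_le (hf : MQH M f) (hc : 0 < c) (hc' : 0 < c') (hM : 1 ≤ M)
    (hX : QCSpace c X) (hY : QCSpace c' Y) (hG : IsOpen G) (hG' : IsOpen G')
    (hfr : (frontier G).Nonempty) (hfr' : (frontier G').Nonempty) (hDG : D ⊆ G) (hD : IsOpen D)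
    (hDfr : (frontier D).Nonempty) (hDfr' : (frontier (imSet f D)).Nonempty) {x y : G}
    (hxy : RectJoined D x y) (hdist_D : dist (x : X) y ≤ bdist D x)
    (hdist_G : c * dist (x : X) y ≤ bdist G x / 2)
    (hdist_G' : dist (f x : Y) (f y) ≤ bdist G' (f x))
    (hdist_D' : c' * dist (f x : Y) (f y) ≤ bdist (imSet f D) (f x) / 2) :
    qhDist (imSet f D) (f x) (f y) ≤ 64 * (c * c' * M) ^ 2 * qhDist D x y := by
  have hD' : IsOpen (imSet f D) := isOpen_imSet f hG' hD
  have hx' : (f x : Y) ∈ imSet f D := (mem_imSet f).2 hxy.left_mem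
  have hxyG' : RectJoined G' (f x) (f y) :=
    RectJoined.image hY hG' f.continuous (hxy.mono hDG)
  have hδ : 0 < bdist G x := bdist_pos hG hfr x.2
  have hδ' : 0 < bdist G' (f x) := bdist_pos hG' hfr' (f x).2
  have hδD' : 0 < bdist (imSet f D) (f x) := bdist_pos hD' hDfr' hx'
  have hk := qhDist_nonneg D x y
  have hratio := hf.bdist_mul_bdist_le hc hc' hM hX hY hG hG' hfr hfr' hDG hD hDfr' hxy.left_mem
  calc qhDist (imSet f D) (f x) (f y)
      ≤ 2 * c' * dist (f x : Y) (f y) / bdist (imSet f D) (f x) :=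
        hY.qhDist_le hD' hDfr' hx' hdist_D'
    _ ≤ 2 * c' * (2 * bdist G' (f x) * (M * (2 * c * (2 * bdist D x * qhDist D x y) /
          bdist G x))) / bdist (imSet f D) (f x) := by
        gcongr
        refine (hxyG'.dist_le_mul_qhDist hG' hfr' hdist_G').trans ?_
        gcongr
        refine (hf x y).2.trans ?_
        gcongr
        refine (hX.qhDist_le hG hfr x.2 hdist_G).trans ?_
        gcongr
        exact hxy.dist_le_mul_qhDist hD hDfr hdist_D
    _ = 16 * (c * c' * M) * qhDist D x y * (bdist D x * bdist G' (f x)) /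
          (bdist (imSet f D) (f x) * bdist G x) := by
        field_simp
        ring
    _ ≤ 16 * (c * c' * M) * qhDist D x y *
          (4 * (c * c' * M) * (bdist (imSet f D) (f x) * bdist G x)) /
          (bdist (imSet f D) (f x) * bdist G x) := by
        gcongr
    _ = 64 * (c * c' * M) ^ 2 * qhDist D x y := by
        field_simp
        ring

theorem MQH.eventually_qhDist_imSet_le (hf : MQH M f) (hc : 0 < c) (hc' : 0 < c') (hM : 1 ≤ M)
    (hX : QCSpace c X) (hY : QCSpace c' Y) (hG : IsOpen G) (hG' : IsOpen G')
    (hGuniv : G ≠ univ) (hGuniv' : G' ≠ univ) (hDG : D ⊆ G) (hD : IsOpen D)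
    (hDconn : IsPreconnected D) (p : D) :
    ∀ᶠ z : D × D in 𝓝 (p, p),
      qhDist (imSet f D) (f (inclusion hDG z.1)) (f (inclusion hDG z.2)) ≤
        64 * (c * c' * M) ^ 2 * qhDist D z.1 z.2 := by
  have hD' : IsOpen (imSet f D) := isOpen_imSet f hG' hD
  have hp' : (f (inclusion hDG p) : Y) ∈ imSet f D := (mem_imSet f).2 p.2
  have hfr := hX.frontier_nonempty hG (hDG p.2) hGuniv
  have hfr' := hY.frontier_nonempty hG' (f (inclusion hDG p)).2 hGuniv'
  have hDfr := hX.frontier_nonempty hD p.2 (ne_top_of_le_ne_top hGuniv hDG)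
  have hDfr' := hY.frontier_nonempty hD' hp' (ne_top_of_le_ne_top hGuniv' (imSet_subset f))
  have htendsto : Tendsto (fun z : D × D => ((z.1 : X), (z.2 : X))) (𝓝 (p, p))
      (𝓝 ((p : X), (p : X))) :=
    Continuous.tendsto (by fun_prop) (p, p)
  have htendsto' : Tendsto
      (fun z : D × D => ((f (inclusion hDG z.1) : Y), (f (inclusion hDG z.2) : Y))) (𝓝 (p, p))
      (𝓝 ((f (inclusion hDG p) : Y), (f (inclusion hDG p) : Y))) :=
    have hcont : Continuous fun z : D => (f (inclusion hDG z) : Y) :=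
      continuous_subtype_val.comp (f.continuous.comp (continuous_inclusion hDG))
    (hcont.prodMap hcont).tendsto (p, p)
  filter_upwards [htendsto.eventually (eventually_mul_dist_le_bdist hD hDfr p.2 1),
    htendsto.eventually (eventually_mul_dist_le_bdist hG hfr (hDG p.2) (2 * c)),
    htendsto'.eventually (eventually_mul_dist_le_bdist hG' hfr' (f _).2 1),
    htendsto'.eventually (eventually_mul_dist_le_bdist hD' hDfr' hp' (2 * c'))]
    with ⟨x, y⟩ h_D h_G h_G' h_D'
  rw [one_mul] at h_D h_G'
  rw [mul_assoc, ← le_div_iff₀' two_pos] at h_G h_D'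
  exact hf.qhDist_imSet_le_of_dist_le hc hc' hM hX hY hG hG' hfr hfr' hDG hD hDfr hDfr'
    (x := inclusion hDG x) (y := inclusion hDG y)
    (hX.rectJoined_of_isPreconnected hD hDconn subset_rfl x.2 y.2) h_D h_G h_G' h_D'

theorem MQH.qhDist_imSet_le (hf : MQH M f) (hc : 0 < c) (hc' : 0 < c') (hM : 1 ≤ M)
    (hX : QCSpace c X) (hY : QCSpace c' Y) (hG : IsOpen G) (hG' : IsOpen G')
    (hGuniv : G ≠ univ) (hGuniv' : G' ≠ univ) (hDG : D ⊆ G) (hD : IsOpen D)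
    (hDconn : IsPreconnected D) {x y : G} (hx : (x : X) ∈ D) (hy : (y : X) ∈ D) :
    qhDist (imSet f D) (f x) (f y) ≤ 64 * (c * c' * M) ^ 2 * qhDist D x y := by
  have hjoined (p q : D) :
      RectJoined (imSet f D) (f (inclusion hDG p)) (f (inclusion hDG q)) :=
    hY.rectJoined_of_isPreconnected (isOpen_imSet f hG' hD) (isPreconnected_imSet f hDG hDconn)
      subset_rfl ((mem_imSet f).2 p.2) ((mem_imSet f).2 q.2)
  exact RectJoined.le_mul_qhDist_of_eventually
    (ρ := fun p q : D => qhDist (imSet f D) (f (inclusion hDG p)) (f (inclusion hDG q)))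
    (x := ⟨x, hx⟩) (y := ⟨y, hy⟩)
    (hX.rectJoined_of_isPreconnected hD hDconn subset_rfl hx hy) hD (by positivity)
    (fun p => (qhDist_self ((mem_imSet f).2 p.2)).le)
    (fun p q r => (hjoined p q).qhDist_triangle (hjoined q r) (isOpen_imSet f hG' hD))
    (hf.eventually_qhDist_imSet_le hc hc' hM hX hY hG hG' hGuniv hGuniv' hDG hD hDconn)

theorem FQC.mono {φ ψ : ℝ → ℝ} (h : FQC φ f) (hφψ : ∀ t, 0 ≤ t → φ t ≤ ψ t) : FQC ψ f :=
  fun D hD hdom x hx y hy =>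
    ⟨(h D hD hdom x hx y hy).1.trans (hφψ _ (qhDist_nonneg _ _ _)),
      (h D hD hdom x hx y hy).2.trans (hφψ _ (qhDist_nonneg _ _ _))⟩

theorem FQC.bilipschitz {K : ℝ} (h : FQC (fun t => K * t) f) (hK : 0 < K) (hDG : D ⊆ G)
    (hD : IsDomainSet D) {x y : X} (hx : x ∈ D) (hy : y ∈ D) :
    1 / K * qhDist D x y ≤ qhDist (imSet f D) (f ⟨x, hDG hx⟩) (f ⟨y, hDG hy⟩) ∧
      qhDist (imSet f D) (f ⟨x, hDG hx⟩) (f ⟨y, hDG hy⟩) ≤ K * qhDist D x y := by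
  obtain ⟨hle, hge⟩ := h D hDG hD x hx y hy
  exact ⟨by rwa [one_div_mul_eq_div, div_le_iff₀' hK], hle⟩

theorem stmt17_general (hc : 0 < c) (hc' : 0 < c') (hM : 1 ≤ M) (hX : QCSpace c X)
    (hY : QCSpace c' Y) (hG : IsOpen G) (hG' : IsOpen G') (hGuniv : G ≠ univ)
    (hGuniv' : G' ≠ univ) (hf : MQH M f) : FQC (fun t => 64 * (c * c' * M) ^ 2 * t) f := by
  intro D hDG hD x hx y hy
  refine ⟨hf.qhDist_imSet_le hc hc' hM hX hY hG hG' hGuniv hGuniv' hDG hD.1 hD.2.isPreconnected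
    (x := ⟨x, hDG hx⟩) (y := ⟨y, hDG hy⟩) hx hy, ?_⟩
  have hinv := (hf.symm (by linarith)).qhDist_imSet_le hc' hc hM hY hX hG' hG hGuniv' hGuniv
    (imSet_subset f) (isOpen_imSet f hG' hD.1) (isPreconnected_imSet f hDG hD.2.isPreconnected)
    ((mem_imSet f (x := ⟨x, hDG hx⟩)).2 hx) ((mem_imSet f (x := ⟨y, hDG hy⟩)).2 hy)
  rwa [imSet_symm_imSet f hDG, f.symm_apply_apply, f.symm_apply_apply, mul_comm c' c] at hinv

end Homeomorphisms

/-- Lemma 11: If `f : G → G'` is `M`-quasihyperbolic, `X` is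
`c`-quasiconvex and `Y` is `c'`-quasiconvex, then `f` is fully `M'`-QH with
`M' = 216(cc'M)²`: for every subdomain `D ⊆ G` and all `x, y ∈ D`,
`(1/M')·k_D(x,y) ≤ k_{f(D)}(f(x),f(y)) ≤ M'·k_D(x,y)`; that is, `f` is `φ`-FQC
with `φ(t) = M't`. -/
theorem stmt17 {X : Type*} [MetricSpace X] {Y : Type*} [MetricSpace Y]
    (c c' M : ℝ) (hc : 1 ≤ c) (hc' : 1 ≤ c') (hM : 1 ≤ M)
    (hX : QCSpace c X) (hY : QCSpace c' Y)
    (G : Set X) (G' : Set Y) (hG : IsProperDomain G) (hG' : IsProperDomain G')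
    (f : ↥G ≃ₜ ↥G') (hf : MQH M f) :
    (∀ D : Set X, ∀ hD : D ⊆ G, IsDomainSet D →
        ∀ x : X, ∀ hx : x ∈ D, ∀ y : X, ∀ hy : y ∈ D,
          (1 / (216 * (c * c' * M) ^ 2)) * qhDist D x y ≤
              qhDist (imSet f D) ↑(f ⟨x, hD hx⟩) ↑(f ⟨y, hD hy⟩) ∧
            qhDist (imSet f D) ↑(f ⟨x, hD hx⟩) ↑(f ⟨y, hD hy⟩) ≤
              216 * (c * c' * M) ^ 2 * qhDist D x y) ∧
      FQC (fun t => 216 * (c * c' * M) ^ 2 * t) f := by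
  have h : FQC (fun t => 216 * (c * c' * M) ^ 2 * t) f :=
    (stmt17_general (by linarith) (by linarith) hM hX hY hG.1 hG'.1 hG.2.2 hG'.2.2 hf).mono
      fun t ht => by gcongr; norm_num
  exact ⟨fun D hD hdom x hx y hy => h.bilipschitz (by positivity) hD hdom hx hy, h⟩
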